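/- arXiv:1009.4092 — 2 statements merged into one kernel-verified Lean document; each statement's English description precedes it below -/
import Mathlib

section
/- Let n > 3/2, α ≥ 0, β = n − 3/2, and let u be a strictly positive classical solution of the thin-film equation ∂_t u + ∂_θ( uⁿ ( ∂_θ³ u + α² ∂_θ u − sin θ ) ) = 0, 2π-periodic in θ, of mass M = ∫_{-π}^{π} u(0,θ) dθ. Then there exists a constant K₀, depending only on n, α, M, and the initial energy E(u(0,·)), such that the entropy satisfies S(u(t,·)) ≤ S(u(0,·)) + K₀ t for all t ≥ 0. -/
open MeasureTheory Real Set Filter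

/-- The thin-film energy `E(v) = (1/2)∫_{-π}^{π} (v'² − α²v²) dθ − ∫_{-π}^{π} v cos θ dθ`. -/
noncomputable def energy (α : ℝ) (u : ℝ → ℝ) : ℝ :=
  (1/2) * (∫ θ in (-π)..π, ((deriv u θ)^2 - α^2 * (u θ)^2)) -
    ∫ θ in (-π)..π, u θ * Real.cos θ

/-- A strictly positive classical solution of the thin-film equation
`∂ₜu + ∂_θ(uⁿ(∂_θ³u + α²∂_θu − sin θ)) = 0` on `(0,∞) × ℝ`: a smooth function on
`[0,∞) × ℝ`, `2π`-periodic and strictly positive, satisfying the equation for `t > 0`. -/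
def IsThinFilmSolution (n α : ℝ) (u : ℝ → ℝ → ℝ) : Prop :=
  ContDiffOn ℝ (⊤ : ℕ∞) (fun p : ℝ × ℝ => u p.1 p.2) (Ici (0:ℝ) ×ˢ (univ : Set ℝ)) ∧
  (∀ t θ : ℝ, 0 ≤ t → 0 < u t θ) ∧
  (∀ t : ℝ, Function.Periodic (u t) (2*π)) ∧
  (∀ t θ : ℝ, 0 < t →
    deriv (fun s => u s θ) t +
      deriv (fun x => u t x ^ n *
        (deriv (deriv (deriv (u t))) x + α^2 * deriv (u t) x - Real.sin x)) θ = 0)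

/-!
Since `uⁿ u^(-β-2) = u^(-1/2)`, integrating by parts once gives
`d/dt ∫ u^(-β) = β(β+1) ∫ u^(-1/2) u' (u''' + α²u' - sin)`. In terms of `w = √u` the last integral
is `-4 ∫ w w''² + 4α² ∫ w w'² + 2 ∫ w cos`, because `∫ w'² w'' = 0`. It is bounded above in terms
of the mass `∫ w²`, which is conserved: `∫ w w'² = -½ ∫ w² w''`, so Young's inequality against
`∫ w w''²` bounds any multiple of `∫ w w'²` up to a multiple of `∫ (w² + w⁴)`. Finally
`∫ w⁴ ≤ sup w² · ∫ w²`, and `sup w²` is at most the average of `w²` plus its total variation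
`∫ 2w|w'|`, which a small multiple of `∫ w w'²` absorbs.
-/

section Periodic

variable {f g : ℝ → ℝ} {a b : ℝ}

theorem periodic_deriv {c : ℝ} (hf : Function.Periodic f c) : Function.Periodic (deriv f) c := by
  intro x
  rw [← deriv_comp_add_const, funext hf]

theorem integral_mul_deriv_eq_neg_of_periodic (hf : ContDiff ℝ 1 f) (hg : ContDiff ℝ 1 g)
    (hfper : Function.Periodic f (b - a)) (hgper : Function.Periodic g (b - a)) :
    ∫ x in a..b, f x * deriv g x = -∫ x in a..b, deriv f x * g x := by
  have hfab : f b = f a := by simpa using hfper a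
  have hgab : g b = g a := by simpa using hgper a
  rw [intervalIntegral.integral_mul_deriv_eq_deriv_mul
    (fun x _ => (hf.differentiable one_ne_zero x).hasDerivAt)
    (fun x _ => (hg.differentiable one_ne_zero x).hasDerivAt)
    (hf.continuous_deriv_one.intervalIntegrable _ _)
    (hg.continuous_deriv_one.intervalIntegrable _ _), hfab, hgab, sub_self, zero_sub]

theorem deriv_fun_sq (hf : Differentiable ℝ f) :
    deriv (fun x => f x ^ 2) = fun x => 2 * (f x * deriv f x) := by
  ext x
  rw [((hf x).hasDerivAt.fun_pow 2).deriv]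
  ring

theorem deriv_deriv_fun_sq (hf : Differentiable ℝ f) (hf' : Differentiable ℝ (deriv f)) :
    deriv (deriv fun x => f x ^ 2)
      = fun x => 2 * (deriv f x ^ 2 + f x * deriv (deriv f) x) := by
  ext x
  rw [deriv_fun_sq hf, (((hf x).hasDerivAt.fun_mul (hf' x).hasDerivAt).const_mul 2).deriv]
  ring

theorem integral_sq_mul_deriv_eq_zero_of_periodic (hf : ContDiff ℝ 1 f)
    (hper : Function.Periodic f (b - a)) : ∫ x in a..b, f x ^ 2 * deriv f x = 0 := by
  have h := integral_mul_deriv_eq_neg_of_periodic (hf.pow 2) hf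
    (hper.comp (fun y => y ^ 2)) hper
  have hcongr : ∀ x, 2 * (f x * deriv f x) * f x = 2 * (f x ^ 2 * deriv f x) := fun x => by ring
  simp only [deriv_fun_sq (hf.differentiable one_ne_zero), hcongr,
    intervalIntegral.integral_const_mul] at h
  linarith

end Periodic

theorem le_average_add_integral_abs_deriv {f : ℝ → ℝ} {a b x : ℝ} (hab : a < b)
    (hf : ContDiff ℝ 1 f) (hx : x ∈ Icc a b) :
    f x ≤ (⨍ y in a..b, f y) + ∫ y in a..b, |deriv f y| := by
  have hint : ∀ c d, IntervalIntegrable (deriv f) volume c d :=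
    fun c d => hf.continuous_deriv_one.intervalIntegrable c d
  obtain ⟨y, hy, hfy⟩ := exists_eq_interval_average hab.ne hf.continuous.continuousOn
  rw [uIoo_of_le hab.le] at hy
  have hsub : uIoc y x ⊆ Ioc a b := Ioc_subset_Ioc (le_min hy.1.le hx.1) (max_le hy.2.le hx.2)
  have hdiff : f x - f y ≤ ∫ z in a..b, |deriv f z| :=
    calc f x - f y = ∫ z in y..x, deriv f z :=
          (intervalIntegral.integral_deriv_eq_sub
            (fun z _ => hf.differentiable one_ne_zero z) (hint y x)).symm
      _ ≤ ∫ z in uIoc y x, |deriv f z| :=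
          (Real.le_norm_self _).trans intervalIntegral.norm_integral_le_integral_norm_uIoc
      _ ≤ ∫ z in Ioc a b, |deriv f z| :=
          setIntegral_mono_set (hint a b).1.norm (Eventually.of_forall fun z => abs_nonneg _)
            hsub.eventuallyLE
      _ = ∫ z in a..b, |deriv f z| := (intervalIntegral.integral_of_le hab.le).symm
  linarith

section Profile

variable {w : ℝ → ℝ} {a b : ℝ}

theorem integral_mul_deriv_sq (hw : ContDiff ℝ 2 w) (hper : Function.Periodic w (b - a)) :
    ∫ x in a..b, w x * deriv w x ^ 2 = -(1 / 2) * ∫ x in a..b, w x ^ 2 * deriv (deriv w) x := by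
  have hw₁ : ContDiff ℝ 1 w := hw.of_le one_le_two
  have h := integral_mul_deriv_eq_neg_of_periodic (hw₁.pow 2)
    (hw.of_le one_add_one_eq_two.le).deriv' (hper.comp (fun y => y ^ 2)) (periodic_deriv hper)
  have hcongr : ∀ x, 2 * (w x * deriv w x) * deriv w x = 2 * (w x * deriv w x ^ 2) :=
    fun x => by ring
  simp only [deriv_fun_sq (hw₁.differentiable one_ne_zero), hcongr,
    intervalIntegral.integral_const_mul] at h
  linarith

theorem integral_deriv_mul_deriv_deriv_deriv_sq (hw : ContDiff ℝ 3 w)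
    (hper : Function.Periodic w (b - a)) :
    ∫ x in a..b, deriv w x * deriv (deriv (deriv fun y => w y ^ 2)) x
      = -2 * ∫ x in a..b, w x * deriv (deriv w) x ^ 2 := by
  have hw₁ : ContDiff ℝ 2 (deriv w) := (hw.of_le two_add_one_eq_three.le).deriv'
  have hw₂ : ContDiff ℝ 1 (deriv (deriv w)) := (hw₁.of_le one_add_one_eq_two.le).deriv'
  have hw₁' : ContDiff ℝ 1 (deriv w) := hw₁.of_le one_le_two
  set z : ℝ → ℝ := fun x => 2 * (deriv w x ^ 2 + w x * deriv (deriv w) x)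
  have hz : deriv (deriv fun y => w y ^ 2) = z :=
    deriv_deriv_fun_sq (hw.differentiable three_ne_zero) (hw₁'.differentiable one_ne_zero)
  have hz_smooth : ContDiff ℝ 1 z :=
    contDiff_const.mul ((hw₁'.pow 2).add ((hw.of_le (by norm_num)).mul hw₂))
  have hz_per : Function.Periodic z (b - a) := fun x => by
    simp only [z, hper x, periodic_deriv hper x, periodic_deriv (periodic_deriv hper) x]
  have hexpand : ∀ x, deriv (deriv w) x * z x
      = 2 * (deriv w x ^ 2 * deriv (deriv w) x) + 2 * (w x * deriv (deriv w) x ^ 2) :=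
    fun x => by ring
  rw [hz, integral_mul_deriv_eq_neg_of_periodic hw₁' hz_smooth (periodic_deriv hper) hz_per]
  simp only [hexpand]
  rw [intervalIntegral.integral_add (Continuous.intervalIntegrable (by fun_prop) _ _)
    (Continuous.intervalIntegrable (by fun_prop) _ _), intervalIntegral.integral_const_mul,
    intervalIntegral.integral_const_mul,
    integral_sq_mul_deriv_eq_zero_of_periodic hw₁' (periodic_deriv hper)]
  ring

theorem mul_integral_pow_four_le (hab : a < b) (hw : ContDiff ℝ 1 w) (hw₀ : ∀ x, 0 ≤ w x)
    {c M : ℝ} (hc : 0 ≤ c) (hM : ∫ x in a..b, w x ^ 2 = M) :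
    c * ∫ x in a..b, w x ^ 4 ≤ (∫ x in a..b, w x * deriv w x ^ 2)
      + (c * M * (M / (b - a)) + (c * M) ^ 2 * ((b - a + M) / 2)) := by
  set S : ℝ := M / (b - a) + ∫ x in a..b, |2 * (w x * deriv w x)| with hS
  have hsup : ∀ x ∈ Icc a b, w x ^ 2 ≤ S := fun x hx => by
    simpa only [deriv_fun_sq (hw.differentiable one_ne_zero), interval_average_eq_div, hM]
      using le_average_add_integral_abs_deriv hab (hw.pow 2) hx
  have hpow_four : ∫ x in a..b, w x ^ 4 ≤ S * M := by
    rw [← hM, ← intervalIntegral.integral_const_mul]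
    refine intervalIntegral.integral_mono_on hab.le
      (Continuous.intervalIntegrable (by fun_prop) _ _)
      (Continuous.intervalIntegrable (by fun_prop) _ _) fun x hx => ?_
    nlinarith [hsup x hx, sq_nonneg (w x)]
  have hyoung : ∀ x, c * M * |2 * (w x * deriv w x)|
      ≤ w x * deriv w x ^ 2 + (c * M) ^ 2 / 2 * (1 + w x ^ 2) := fun x => by
    rw [abs_mul, abs_mul, abs_of_pos two_pos, abs_of_nonneg (hw₀ x), ← sq_abs (deriv w x)]
    nlinarith [mul_nonneg (hw₀ x) (sq_nonneg (|deriv w x| - c * M)),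
      mul_nonneg (sq_nonneg (c * M)) (sq_nonneg (w x - 1))]
  have hvariation : c * M * ∫ x in a..b, |2 * (w x * deriv w x)|
      ≤ (∫ x in a..b, w x * deriv w x ^ 2) + (c * M) ^ 2 / 2 * (b - a + M) := by
    rw [← intervalIntegral.integral_const_mul]
    refine (intervalIntegral.integral_mono hab.le
      (Continuous.intervalIntegrable (by fun_prop) _ _)
      (Continuous.intervalIntegrable (by fun_prop) _ _) hyoung).trans_eq ?_
    rw [intervalIntegral.integral_add (Continuous.intervalIntegrable (by fun_prop) _ _)
      (Continuous.intervalIntegrable (by fun_prop) _ _), intervalIntegral.integral_const_mul,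
      intervalIntegral.integral_add (Continuous.intervalIntegrable (by fun_prop) _ _)
      (Continuous.intervalIntegrable (by fun_prop) _ _), hM, intervalIntegral.integral_const,
      smul_eq_mul, mul_one]
  calc c * ∫ x in a..b, w x ^ 4 ≤ c * (S * M) := by gcongr
    _ = c * M * (M / (b - a)) + c * M * ∫ x in a..b, |2 * (w x * deriv w x)| := by rw [hS]; ring
    _ ≤ _ := by linarith

/-- Upper bound for `κ ∫ w w'² - ∫ w w''²` over profiles `w ≥ 0` of period `L` and squared norm
`∫ w² = M`. -/
noncomputable def interpolationBound (κ L M : ℝ) : ℝ :=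
  let k := (κ + 1) ^ 2 / 32 * M
  k + k * (M / L) + k ^ 2 * ((L + M) / 2)

theorem mul_integral_mul_deriv_sq_le (hab : a < b) (hw : ContDiff ℝ 2 w) (hw₀ : ∀ x, 0 ≤ w x)
    (hper : Function.Periodic w (b - a)) (κ : ℝ) {M : ℝ} (hM : ∫ x in a..b, w x ^ 2 = M) :
    κ * ∫ x in a..b, w x * deriv w x ^ 2
      ≤ (∫ x in a..b, w x * deriv (deriv w) x ^ 2) + interpolationBound κ (b - a) M := by
  have : Continuous (deriv (deriv w)) :=
    (hw.of_le one_add_one_eq_two.le).deriv'.continuous_deriv_one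
  set c : ℝ := (κ + 1) ^ 2 / 32 with hc
  have hyoung : ∀ x, -((κ + 1) / 2) * (w x ^ 2 * deriv (deriv w) x)
      ≤ w x * deriv (deriv w) x ^ 2 + c * (w x ^ 2 + w x ^ 4) := fun x => by
    have hsquare := mul_nonneg (hw₀ x) (sq_nonneg (deriv (deriv w) x + (κ + 1) / 4 * w x))
    have hcube : 0 ≤ c * (w x ^ 2 * (w x - 1) ^ 2) := by positivity
    rw [hc] at hcube ⊢
    linarith
  -- The factor `κ + 1` leaves one copy of `∫ w w'²` to pay for the quartic term.
  have hupper : (κ + 1) * ∫ x in a..b, w x * deriv w x ^ 2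
      ≤ (∫ x in a..b, w x * deriv (deriv w) x ^ 2) + c * (M + ∫ x in a..b, w x ^ 4) :=
    calc (κ + 1) * ∫ x in a..b, w x * deriv w x ^ 2
        = ∫ x in a..b, -((κ + 1) / 2) * (w x ^ 2 * deriv (deriv w) x) := by
          rw [integral_mul_deriv_sq hw hper, intervalIntegral.integral_const_mul]
          ring
      _ ≤ ∫ x in a..b, (w x * deriv (deriv w) x ^ 2 + c * (w x ^ 2 + w x ^ 4)) :=
          intervalIntegral.integral_mono hab.le (Continuous.intervalIntegrable (by fun_prop) _ _)
            (Continuous.intervalIntegrable (by fun_prop) _ _) hyoung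
      _ = _ := by
          rw [intervalIntegral.integral_add (Continuous.intervalIntegrable (by fun_prop) _ _)
            (Continuous.intervalIntegrable (by fun_prop) _ _),
            intervalIntegral.integral_const_mul,
            intervalIntegral.integral_add (Continuous.intervalIntegrable (by fun_prop) _ _)
            (Continuous.intervalIntegrable (by fun_prop) _ _), hM]
  have hfour := mul_integral_pow_four_le hab (hw.of_le one_le_two) hw₀
    (by positivity : 0 ≤ c) hM
  simp only [interpolationBound, ← hc]
  linarith

end Profile

section EntropyProduction

/-- The integral `∫ v⁻¹ᐟ² v' (v''' + α²v' - sin)`. It equals `d/dt ∫ Φ(u)` along a solution `u` of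
the thin-film equation when `Φ''(y) = y⁻ⁿ⁻¹ᐟ²`, whatever the exponent `n`. -/
noncomputable def entropyProduction (α : ℝ) (v : ℝ → ℝ) : ℝ :=
  ∫ x in (-π)..π, deriv v x / √(v x) *
    (deriv (deriv (deriv v)) x + α ^ 2 * deriv v x - Real.sin x)

variable {w : ℝ → ℝ}

theorem integral_deriv_mul_sin (hw : ContDiff ℝ 1 w) (hper : Function.Periodic w (2 * π)) :
    ∫ x in (-π)..π, deriv w x * Real.sin x = -∫ x in (-π)..π, w x * Real.cos x := by
  have hlen : π - -π = 2 * π := by ring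
  have h := integral_mul_deriv_eq_neg_of_periodic hw Real.contDiff_sin
    (hlen ▸ hper) (hlen ▸ Real.sin_periodic)
  rw [Real.deriv_sin] at h
  rw [h, neg_neg]

theorem integral_mul_cos_le (hw : Continuous w) :
    ∫ x in (-π)..π, w x * Real.cos x ≤ π + (∫ x in (-π)..π, w x ^ 2) / 2 := by
  have hpi : -π ≤ π := by linarith [Real.pi_pos]
  have hpt : ∀ x, w x * Real.cos x ≤ 1 / 2 * (1 + w x ^ 2) := fun x => by
    nlinarith [Real.cos_sq_le_one x, sq_nonneg (w x - Real.cos x)]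
  refine (intervalIntegral.integral_mono hpi (Continuous.intervalIntegrable (by fun_prop) _ _)
    (Continuous.intervalIntegrable (by fun_prop) _ _) hpt).trans_eq ?_
  rw [intervalIntegral.integral_const_mul,
    intervalIntegral.integral_add (Continuous.intervalIntegrable (by fun_prop) _ _)
    (Continuous.intervalIntegrable (by fun_prop) _ _), intervalIntegral.integral_const, smul_eq_mul]
  ring

theorem entropyProduction_sq (α : ℝ) (hw : ContDiff ℝ 3 w) (hw₀ : ∀ x, 0 < w x)
    (hper : Function.Periodic w (2 * π)) :
    entropyProduction α (fun x => w x ^ 2)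
      = 4 * (α ^ 2 * (∫ x in (-π)..π, w x * deriv w x ^ 2)
          - ∫ x in (-π)..π, w x * deriv (deriv w) x ^ 2)
        + 2 * ∫ x in (-π)..π, w x * Real.cos x := by
  have hw₁ : ContDiff ℝ 1 w := hw.of_le (by norm_num)
  have : Continuous (deriv (deriv (deriv fun x => w x ^ 2))) :=
    ((hw.pow 2).iterate_deriv' 0 3).continuous
  have hexpand : ∀ x, deriv (fun y => w y ^ 2) x / √(w x ^ 2) *
        (deriv (deriv (deriv fun y => w y ^ 2)) x + α ^ 2 * deriv (fun y => w y ^ 2) x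
          - Real.sin x)
      = 2 * (deriv w x * deriv (deriv (deriv fun y => w y ^ 2)) x)
        + 4 * α ^ 2 * (w x * deriv w x ^ 2) - 2 * (deriv w x * Real.sin x) := fun x => by
    have := (hw₀ x).ne'
    rw [Real.sqrt_sq (hw₀ x).le, deriv_fun_sq (hw₁.differentiable one_ne_zero)]
    field_simp
    ring
  have hlen : π - -π = 2 * π := by ring
  simp only [entropyProduction, hexpand]
  rw [intervalIntegral.integral_sub (Continuous.intervalIntegrable (by fun_prop) _ _)
    (Continuous.intervalIntegrable (by fun_prop) _ _),
    intervalIntegral.integral_add (Continuous.intervalIntegrable (by fun_prop) _ _)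
    (Continuous.intervalIntegrable (by fun_prop) _ _), intervalIntegral.integral_const_mul,
    intervalIntegral.integral_const_mul, intervalIntegral.integral_const_mul,
    integral_deriv_mul_deriv_deriv_deriv_sq hw (hlen ▸ hper), integral_deriv_mul_sin hw₁ hper]
  ring

theorem entropyProduction_le {v : ℝ → ℝ} (α : ℝ) (hv : ContDiff ℝ 3 v) (hv₀ : ∀ x, 0 < v x)
    (hper : Function.Periodic v (2 * π)) :
    entropyProduction α v ≤ 4 * interpolationBound (α ^ 2) (2 * π) (∫ x in (-π)..π, v x)
      + 2 * π + ∫ x in (-π)..π, v x := by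
  have hw : ContDiff ℝ 3 fun x => √(v x) := hv.sqrt fun x => (hv₀ x).ne'
  have hw₀ : ∀ x, 0 < √(v x) := fun x => Real.sqrt_pos.2 (hv₀ x)
  have hwper : Function.Periodic (fun x => √(v x)) (2 * π) := hper.comp Real.sqrt
  have hsq : (fun x => √(v x) ^ 2) = v := funext fun x => Real.sq_sqrt (hv₀ x).le
  have hmass : ∫ x in (-π)..π, √(v x) ^ 2 = ∫ x in (-π)..π, v x := by rw [hsq]
  have hlen : π - -π = 2 * π := by ring
  have hinterp := mul_integral_mul_deriv_sq_le (neg_lt_self Real.pi_pos)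
    (hw.of_le (by norm_num)) (fun x => (hw₀ x).le) (hlen ▸ hwper) (α ^ 2) hmass
  have hcos := integral_mul_cos_le hw.continuous
  have hprod := entropyProduction_sq α hw hw₀ hwper
  rw [hlen] at hinterp
  rw [hmass] at hcos
  rw [hsq] at hprod
  linarith

end EntropyProduction

theorem deriv_deriv_rpow_const (p y : ℝ) :
    deriv (deriv fun x : ℝ => x ^ p) y = p * (p - 1) * y ^ (p - 2) := by
  rw [funext fun x => Real.deriv_rpow_const x p, deriv_const_mul_field, Real.deriv_rpow_const,
    sub_sub, one_add_one_eq_two, mul_assoc]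

theorem hasDerivAt_intervalIntegral_of_continuousOn_deriv {E : Type*} [NormedAddCommGroup E]
    [NormedSpace ℝ E] {F F' : ℝ → ℝ → E} {s : Set ℝ} {a b t : ℝ} (hs : IsOpen s) (ht : t ∈ s)
    (hF : ∀ r ∈ s, Continuous (F r))
    (hF' : ContinuousOn (fun p : ℝ × ℝ => F' p.1 p.2) (s ×ˢ univ))
    (hderiv : ∀ r ∈ s, ∀ x, HasDerivAt (fun r => F r x) (F' r x) r) :
    HasDerivAt (fun r => ∫ x in a..b, F r x) (∫ x in a..b, F' t x) t := by
  obtain ⟨ε, hε, hball⟩ := Metric.nhds_basis_closedBall.mem_iff.1 (hs.mem_nhds ht)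
  obtain ⟨C, hC⟩ := ((isCompact_closedBall t ε).prod isCompact_uIcc).exists_bound_of_continuousOn
    (hF'.mono (prod_mono hball (subset_univ (uIcc a b))))
  have hF't : Continuous (F' t) :=
    hF'.comp_continuous (f := fun x => (t, x)) (by fun_prop) fun x => ⟨ht, mem_univ x⟩
  refine (intervalIntegral.hasDerivAt_integral_of_dominated_loc_of_deriv_le
    (bound := fun _ => C) (Metric.closedBall_mem_nhds t hε) ?_
    ((hF t ht).intervalIntegrable _ _) hF't.aestronglyMeasurable ?_
    (continuous_const.intervalIntegrable _ _) ?_).2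
  · filter_upwards [hs.mem_nhds ht] with r hr
    exact (hF r hr).aestronglyMeasurable
  · exact Eventually.of_forall fun x hx r hr => hC (r, x) ⟨hr, uIoc_subset_uIcc hx⟩
  · exact Eventually.of_forall fun x _ r hr => hderiv r (hball hr) x

theorem hasDerivAt_intervalIntegral_of_contDiffOn {E : Type*} [NormedAddCommGroup E]
    [NormedSpace ℝ E] {F : ℝ → ℝ → E} {s : Set ℝ} {a b t : ℝ} (hs : IsOpen s)
    (hF : ContDiffOn ℝ 1 (fun p : ℝ × ℝ => F p.1 p.2) (s ×ˢ univ)) (ht : t ∈ s) :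
    HasDerivAt (fun r => ∫ x in a..b, F r x) (∫ x in a..b, deriv (fun r => F r x) t) t := by
  have hopen : IsOpen (s ×ˢ (univ : Set ℝ)) := hs.prod isOpen_univ
  have hderiv : ∀ r ∈ s, ∀ x, HasDerivAt (fun r => F r x)
      (fderiv ℝ (fun p : ℝ × ℝ => F p.1 p.2) (r, x) (1, 0)) r := fun r hr x =>
    ((hF.contDiffAt (hopen.mem_nhds ⟨hr, mem_univ x⟩)).differentiableAt one_ne_zero).hasFDerivAt
      |>.comp_hasDerivAt (f := fun r => (r, x)) r
        ((hasDerivAt_id r).prodMk (hasDerivAt_const r x))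
  refine hasDerivAt_intervalIntegral_of_continuousOn_deriv
    (F' := fun r x => deriv (fun r => F r x) r) hs ht (fun r hr => ?_) ?_
    fun r hr x => (hderiv r hr x).differentiableAt.hasDerivAt
  · exact hF.continuousOn.comp_continuous (f := fun x => (r, x)) (by fun_prop)
      fun x => ⟨hr, mem_univ x⟩
  · exact ((hF.continuousOn_fderiv_of_isOpen hopen le_rfl).clm_apply continuousOn_const).congr
      fun p hp => (hderiv p.1 hp.1 p.2).deriv

/-- The flux `J = vⁿ(v''' + α²v' - sin)`, for which the thin-film equation reads
`∂ₜu + ∂_θ J = 0`. -/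
noncomputable def thinFilmFlux (n α : ℝ) (v : ℝ → ℝ) (x : ℝ) : ℝ :=
  v x ^ n * (deriv (deriv (deriv v)) x + α ^ 2 * deriv v x - Real.sin x)

theorem contDiff_thinFilmFlux {n α : ℝ} {v : ℝ → ℝ} (hv : ContDiff ℝ (⊤ : ℕ∞) v)
    (hv₀ : ∀ x, 0 < v x) : ContDiff ℝ (⊤ : ℕ∞) (thinFilmFlux n α v) := by
  have hv₁ := (contDiff_infty_iff_deriv.1 hv).2
  have hv₂ := (contDiff_infty_iff_deriv.1 hv₁).2
  have hv₃ := (contDiff_infty_iff_deriv.1 hv₂).2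
  exact (hv.rpow_const_of_ne fun x => (hv₀ x).ne').mul
    ((hv₃.add (contDiff_const.mul hv₁)).sub Real.contDiff_sin)

theorem periodic_thinFilmFlux {n α : ℝ} {v : ℝ → ℝ} (hper : Function.Periodic v (2 * π)) :
    Function.Periodic (thinFilmFlux n α v) (2 * π) := fun x => by
  simp only [thinFilmFlux, hper x, periodic_deriv hper x,
    periodic_deriv (periodic_deriv (periodic_deriv hper)) x, Real.sin_add_two_pi]

namespace IsThinFilmSolution

variable {n α t : ℝ} {u : ℝ → ℝ → ℝ} {φ : ℝ → ℝ}

theorem contDiff (hu : IsThinFilmSolution n α u) (ht : 0 ≤ t) : ContDiff ℝ (⊤ : ℕ∞) (u t) :=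
  hu.1.comp_contDiff (f := fun x : ℝ => (t, x)) (by fun_prop) fun x => ⟨ht, mem_univ x⟩

theorem pos (hu : IsThinFilmSolution n α u) (ht : 0 ≤ t) (x : ℝ) : 0 < u t x :=
  hu.2.1 t x ht

theorem periodic (hu : IsThinFilmSolution n α u) (t : ℝ) : Function.Periodic (u t) (2 * π) :=
  hu.2.2.1 t

theorem deriv_time_eq (hu : IsThinFilmSolution n α u) (ht : 0 < t) (x : ℝ) :
    deriv (fun s => u s x) t = -deriv (thinFilmFlux n α (u t)) x :=
  eq_neg_of_add_eq_zero_left (hu.2.2.2 t x ht)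

theorem continuousOn_integral_comp (hu : IsThinFilmSolution n α u)
    (hφ : ContinuousOn φ (Ioi 0)) :
    ContinuousOn (fun t => ∫ x in (-π)..π, φ (u t x)) (Ici 0) := by
  have hext : Continuous fun p : ℝ × ℝ => u (max p.1 0) p.2 :=
    hu.1.continuousOn.comp_continuous (f := fun p : ℝ × ℝ => (max p.1 0, p.2)) (by fun_prop)
      fun p => ⟨le_max_right p.1 0, mem_univ p.2⟩
  have hint : Continuous fun t => ∫ x in (-π)..π, φ (u (max t 0) x) :=
    intervalIntegral.continuous_parametric_intervalIntegral_of_continuous'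
      (f := fun t x => φ (u (max t 0) x))
      (hφ.comp_continuous hext fun p => hu.pos (le_max_right p.1 0) p.2) _ _
  exact hint.continuousOn.congr fun t ht => by simp only [max_eq_left (mem_Ici.1 ht)]

theorem contDiffOn_Ioi (hu : IsThinFilmSolution n α u) :
    ContDiffOn ℝ 1 (fun p : ℝ × ℝ => u p.1 p.2) (Ioi 0 ×ˢ univ) :=
  (hu.1.mono (prod_mono Ioi_subset_Ici_self subset_rfl)).of_le (by simp)

theorem differentiableAt_time (hu : IsThinFilmSolution n α u) (ht : 0 < t) (x : ℝ) :
    DifferentiableAt ℝ (fun s => u s x) t := by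
  have h : DifferentiableAt ℝ (fun p : ℝ × ℝ => u p.1 p.2) (t, x) :=
    (hu.contDiffOn_Ioi.contDiffAt ((isOpen_Ioi.prod isOpen_univ).mem_nhds
      (mk_mem_prod ht (mem_univ x)))).differentiableAt one_ne_zero
  exact h.comp t (f := fun s => (s, x)) (by fun_prop)

theorem hasDerivAt_integral_comp (hu : IsThinFilmSolution n α u) (hφ : ContDiffOn ℝ 2 φ (Ioi 0))
    (ht : 0 < t) :
    HasDerivAt (fun s => ∫ x in (-π)..π, φ (u s x))
      (∫ x in (-π)..π, deriv (deriv φ) (u t x) * deriv (u t) x * thinFilmFlux n α (u t) x) t := by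
  have hφ₁ : ContDiffOn ℝ 1 (deriv φ) (Ioi 0) :=
    hφ.deriv_of_isOpen isOpen_Ioi one_add_one_eq_two.le
  have hφ_diff : ∀ y, 0 < y → DifferentiableAt ℝ φ y := fun y hy =>
    (hφ.contDiffAt (Ioi_mem_nhds hy)).differentiableAt two_ne_zero
  have hφ₁_diff : ∀ y, 0 < y → DifferentiableAt ℝ (deriv φ) y := fun y hy =>
    (hφ₁.contDiffAt (Ioi_mem_nhds hy)).differentiableAt one_ne_zero
  have hpos := hu.pos ht.le
  have hv := hu.contDiff ht.le
  have hcomp : ContDiffOn ℝ 1 (fun p : ℝ × ℝ => φ (u p.1 p.2)) (Ioi 0 ×ˢ univ) :=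
    (hφ.of_le one_le_two).comp hu.contDiffOn_Ioi fun p hp => hu.pos (le_of_lt hp.1) p.2
  have htime : ∀ x, deriv (fun s => φ (u s x)) t
      = -(deriv φ (u t x) * deriv (thinFilmFlux n α (u t)) x) := fun x =>
    ((hφ_diff _ (hpos x)).hasDerivAt.comp t (hu.differentiableAt_time ht x).hasDerivAt).deriv.trans
      (by rw [hu.deriv_time_eq ht, mul_neg])
  have hspace : ∀ x, deriv (fun y => deriv φ (u t y)) x
      = deriv (deriv φ) (u t x) * deriv (u t) x := fun x =>
    ((hφ₁_diff _ (hpos x)).hasDerivAt.comp x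
      (hv.differentiable (by simp) x).hasDerivAt).deriv
  have hlen : π - -π = 2 * π := by ring
  have hparts := integral_mul_deriv_eq_neg_of_periodic
    (hφ₁.comp_contDiff (hv.of_le (by simp)) hpos)
    ((contDiff_thinFilmFlux (n := n) (α := α) hv hpos).of_le (by simp))
    (hlen ▸ (hu.periodic t).comp (deriv φ)) (hlen ▸ periodic_thinFilmFlux (hu.periodic t))
  refine (hasDerivAt_intervalIntegral_of_contDiffOn isOpen_Ioi hcomp ht).congr_deriv ?_
  simp only [htime, ← hspace, intervalIntegral.integral_neg]
  exact neg_eq_iff_eq_neg.2 hparts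

theorem exists_integral_comp_sub_eq (hu : IsThinFilmSolution n α u)
    (hφ : ContDiffOn ℝ 2 φ (Ioi 0)) (ht : 0 < t) :
    ∃ s > 0, (∫ x in (-π)..π, φ (u t x)) - ∫ x in (-π)..π, φ (u 0 x)
      = (∫ x in (-π)..π,
          deriv (deriv φ) (u s x) * deriv (u s) x * thinFilmFlux n α (u s) x) * t := by
  obtain ⟨s, hs, hslope⟩ := exists_hasDerivAt_eq_slope _ _ ht
    ((hu.continuousOn_integral_comp hφ.continuousOn).mono Icc_subset_Ici_self)
    fun s hs => hu.hasDerivAt_integral_comp hφ hs.1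
  refine ⟨s, hs.1, ?_⟩
  rw [hslope, sub_zero, div_mul_cancel₀ _ ht.ne']

theorem integral_eq_integral_zero (hu : IsThinFilmSolution n α u) (ht : 0 < t) :
    ∫ x in (-π)..π, u t x = ∫ x in (-π)..π, u 0 x := by
  obtain ⟨s, -, hs⟩ := hu.exists_integral_comp_sub_eq contDiffOn_id ht
  simpa [sub_eq_zero] using hs

theorem exists_integral_rpow_sub_eq (hu : IsThinFilmSolution n α u) {β : ℝ}
    (hβ : β = n - 3 / 2) (ht : 0 < t) :
    ∃ s > 0, (∫ x in (-π)..π, u t x ^ (-β)) - ∫ x in (-π)..π, u 0 x ^ (-β)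
      = β * (β + 1) * entropyProduction α (u s) * t := by
  have hsmooth : ContDiffOn ℝ 2 (fun y : ℝ => y ^ (-β)) (Ioi 0) :=
    contDiffOn_id.rpow_const_of_ne fun y hy => ne_of_gt hy
  obtain ⟨s, hs, heq⟩ := hu.exists_integral_comp_sub_eq hsmooth ht
  refine ⟨s, hs, heq.trans ?_⟩
  rw [entropyProduction, ← intervalIntegral.integral_const_mul]
  congr 1
  refine intervalIntegral.integral_congr fun x _ => ?_
  have hpow : u s x ^ (-β - 2) * u s x ^ n = (√(u s x))⁻¹ := by
    have hpos := hu.pos hs.le x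
    rw [← Real.rpow_add hpos, Real.sqrt_eq_rpow, ← Real.rpow_neg hpos.le, hβ]
    congr 1
    ring
  simp only [deriv_deriv_rpow_const, thinFilmFlux, div_eq_mul_inv, ← hpow]
  ring

end IsThinFilmSolution

theorem entropy_linear_bound_general (n α : ℝ) (hn : n ≤ 1 / 2 ∨ 3 / 2 ≤ n) (β : ℝ)
    (hβ : β = n - 3 / 2) (M : ℝ) :
    ∃ K₀ : ℝ, ∀ u : ℝ → ℝ → ℝ, IsThinFilmSolution n α u →
      (∫ θ in (-π)..π, u 0 θ) = M → ∀ t : ℝ, 0 ≤ t →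
        (∫ θ in (-π)..π, u t θ ^ (-β)) ≤ (∫ θ in (-π)..π, u 0 θ ^ (-β)) + K₀ * t := by
  refine ⟨β * (β + 1) * (4 * interpolationBound (α ^ 2) (2 * π) M + 2 * π + M),
    fun u hu hmass t ht => ?_⟩
  obtain rfl | ht := ht.eq_or_lt
  · simp
  have hconvex : 0 ≤ β * (β + 1) := by
    rcases hn with hn | hn <;> nlinarith
  obtain ⟨s, hs, heq⟩ := hu.exists_integral_rpow_sub_eq hβ ht
  have hprod := entropyProduction_le α (contDiff_infty.1 (hu.contDiff hs.le) 3) (hu.pos hs.le)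
    (hu.periodic s)
  rw [hu.integral_eq_integral_zero hs, hmass] at hprod
  have := mul_le_mul_of_nonneg_right (mul_le_mul_of_nonneg_left hprod hconvex) ht.le
  linarith

/-- Linear-in-time entropy bound: for `n > 3/2` and `β = n − 3/2`, there
is a constant `K₀`, depending only on `n`, `α`, the mass `M`, and the initial energy `E₀`,
such that every strictly positive classical solution with these data satisfies
`S(u(t,·)) ≤ S(u(0,·)) + K₀ t` for all `t ≥ 0`. -/
theorem entropy_linear_bound (n α : ℝ) (hn : 3/2 < n) (hα : 0 ≤ α)
    (β : ℝ) (hβ : β = n - 3/2) (M E₀ : ℝ) (hM : 0 < M) :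
    ∃ K₀ : ℝ, ∀ u : ℝ → ℝ → ℝ, IsThinFilmSolution n α u →
      (∫ θ in (-π)..π, u 0 θ) = M → energy α (u 0) = E₀ →
      ∀ t : ℝ, 0 ≤ t →
        (∫ θ in (-π)..π, u t θ ^ (-β)) ≤ (∫ θ in (-π)..π, u 0 θ ^ (-β)) + K₀ * t := by
  obtain ⟨K₀, hK₀⟩ := entropy_linear_bound_general n α (Or.inr hn.le) β hβ M
  exact ⟨K₀, fun u hu hmass _ => hK₀ u hu hmass⟩
end

section
/- Let β > 1, let S₀, K₀ > 0, let θ₀ ∈ (−π, π), and let u* : ℝ → [0,∞) be a continuous 2π-periodic function with u*(θ₀) = 0 that vanishes quadratically at θ₀: there is a constant C > 0 with u*(θ) ≤ C(θ − θ₀)² for all θ ∈ (−π,π). Let u : [0,∞) × ℝ → [0,∞) be measurable and 2π-periodic in the second variable, and suppose the entropy bound ∫_{-π}^{π} u(t,θ)^{-β} dθ ≤ S₀ + K₀ t holds for all t ≥ 0. Then there exist positive constants K₂ and K₃ such that ( ∫_{-π}^{π} (u(t,θ) − u*(θ))² dθ )^{1/2} ≥ (K₂ + K₃ t)^{−3/(2(β−1))}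 for all t ≥ 0. -/
open MeasureTheory Real Set Filter

/-!
Suppose `w ≤ C |x - x₀| ^ k` near `x₀` and let `v` have entropy `∫ v ^ (-β) ≤ E`. By Markov's
inequality `v ≥ 2 C δ ^ k` on the ball of radius `δ` about `x₀`, outside a set of measure at most
`E (2 C δ ^ k) ^ β`. As soon as this is at most `δ`, half the measure of the ball, one has
`v - w ≥ C δ ^ k` on a set of measure at least `δ`, so `‖v - w‖_p ≥ C δ ^ (k + 1 / p)`. The
critical scale is `δ ∼ E ^ (-1 / (k β - 1))`. For `k = p = 2` this gives the decay exponent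
`5 / (2 (2 β - 1))`, which is smaller than `3 / (2 (β - 1))`.
-/

open scoped ENNReal Topology

/-- The entropy `∫ v ^ (-β) dμ` of a function `v`. It is valued in `ℝ≥0∞`, so that for `0 < β`
the integrand is `∞` at the zeros of `v` (and where `v` is negative). -/
noncomputable def powerEntropy {α : Type*} [MeasurableSpace α] (β : ℝ) (v : α → ℝ)
    (μ : Measure α) : ℝ≥0∞ :=
  ∫⁻ x, (ENNReal.ofReal (v x))⁻¹ ^ β ∂μ

section Measure

variable {α : Type*} [MeasurableSpace α] {μ : Measure α} {v w : α → ℝ} {p : ℝ≥0∞} {a : ℝ}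

lemma measure_lt_le_powerEntropy_mul {β m : ℝ} (hβ : 0 ≤ β) (hm : 0 < m)
    (hv : AEMeasurable v μ) :
    μ {x | v x < m} ≤ powerEntropy β v μ * ENNReal.ofReal m ^ β := by
  have hm₀ : ENNReal.ofReal m ≠ 0 := (ENNReal.ofReal_pos.2 hm).ne'
  have hsub : {x | v x < m} ⊆
      {x | (ENNReal.ofReal m)⁻¹ ^ β ≤ (ENNReal.ofReal (v x))⁻¹ ^ β} := fun x hx ↦
    ENNReal.rpow_le_rpow (ENNReal.inv_le_inv.2 (ENNReal.ofReal_le_ofReal (le_of_lt hx))) hβ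
  calc μ {x | v x < m}
      ≤ powerEntropy β v μ / (ENNReal.ofReal m)⁻¹ ^ β :=
        (measure_mono hsub).trans <| meas_ge_le_lintegral_div (by fun_prop)
          (by simp [hm₀]) (by simp [hm₀])
    _ = powerEntropy β v μ * ENNReal.ofReal m ^ β := by
        rw [div_eq_mul_inv, ENNReal.inv_rpow, inv_inv]

lemma ofReal_mul_measure_sdiff_rpow_le_eLpNorm_sub (hp₀ : p ≠ 0) (hp : p ≠ ∞)
    (hv : AEMeasurable v μ) (hw : AEMeasurable w μ) {A : Set α} (hwA : ∀ x ∈ A, w x ≤ a) :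
    ENNReal.ofReal a * μ (A \ {x | v x < 2 * a}) ^ (1 / p.toReal) ≤
      eLpNorm (fun x ↦ v x - w x) p μ := by
  have hsub : A \ {x | v x < 2 * a} ⊆ {x | ENNReal.ofReal a ≤ ‖v x - w x‖ₑ} := by
    rintro x ⟨hxA, hvx⟩
    have hle : a ≤ v x - w x := by linarith [hwA x hxA, (not_lt.1 hvx : 2 * a ≤ v x)]
    rw [mem_ofPred_eq, ← ofReal_norm]
    exact ENNReal.ofReal_le_ofReal (hle.trans (Real.le_norm_self _))
  have hp_pos : 0 < p.toReal := ENNReal.toReal_pos hp₀ hp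
  have hcheb := mul_meas_ge_le_pow_eLpNorm' μ hp₀ hp (hv.sub hw).aestronglyMeasurable
    (ENNReal.ofReal a)
  rw [one_div, ← ENNReal.rpow_le_rpow_iff hp_pos, ENNReal.mul_rpow_of_nonneg _ _ hp_pos.le,
    ENNReal.rpow_inv_rpow hp_pos.ne']
  exact (mul_le_mul_right (measure_mono hsub) _).trans hcheb

lemma ofReal_mul_measure_sub_rpow_le_eLpNorm_sub {β : ℝ} (hβ : 0 ≤ β) (ha : 0 < a)
    (hp₀ : p ≠ 0) (hp : p ≠ ∞) (hv : AEMeasurable v μ) (hw : AEMeasurable w μ) {A : Set α}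
    (hwA : ∀ x ∈ A, w x ≤ a) :
    ENNReal.ofReal a *
        (μ A - powerEntropy β v μ * ENNReal.ofReal (2 * a) ^ β) ^ (1 / p.toReal) ≤
      eLpNorm (fun x ↦ v x - w x) p μ := by
  refine le_trans ?_ (ofReal_mul_measure_sdiff_rpow_le_eLpNorm_sub hp₀ hp hv hw hwA)
  gcongr
  exact (tsub_le_tsub_left (measure_lt_le_powerEntropy_mul hβ (by positivity) hv) _).trans
    le_measure_sdiff

end Measure

lemma mul_rpow_neg_inv_sub_one_rpow {M b : ℝ} (hM : 0 < M) (hb : b ≠ 1) :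
    M * (M ^ (-(b - 1)⁻¹)) ^ b = M ^ (-(b - 1)⁻¹) := by
  have hb₀ : b - 1 ≠ 0 := sub_ne_zero.2 hb
  have hexp : 1 + -(b - 1)⁻¹ * b = -(b - 1)⁻¹ := by
    field_simp
    ring
  rw [← Real.rpow_mul hM.le, ← Real.rpow_one_add' hM.le
    (hexp.trans_ne (neg_ne_zero.2 (inv_ne_zero hb₀))), hexp]

lemma mul_mul_rpow_rpow_le_rpow_neg_inv_sub_one {E c k β M : ℝ} (hM : 0 < M) (hc : 0 ≤ c)
    (hkβ : k * β ≠ 1) (hEM : c ^ β * E ≤ M) :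
    E * (c * (M ^ (-(k * β - 1)⁻¹)) ^ k) ^ β ≤ M ^ (-(k * β - 1)⁻¹) := by
  set δ := M ^ (-(k * β - 1)⁻¹)
  have hδ : 0 ≤ δ := by positivity
  calc E * (c * δ ^ k) ^ β
      = c ^ β * E * δ ^ (k * β) := by
        rw [Real.mul_rpow hc (by positivity), Real.rpow_mul hδ]
        ring
    _ ≤ M * δ ^ (k * β) := by gcongr
    _ = δ := mul_rpow_neg_inv_sub_one_rpow hM hkβ

section Touchdown

variable {s : Set ℝ} {v w : ℝ → ℝ} {β k C x₀ : ℝ} {p : ℝ≥0∞}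

lemma ofReal_mul_rpow_le_eLpNorm_sub_of_powerEntropy_mul_le {δ : ℝ} (hβ : 0 ≤ β) (hk : 0 ≤ k)
    (hC : 0 < C) (hδ : 0 < δ) (hp₀ : p ≠ 0) (hp : p ≠ ∞)
    (hv : AEMeasurable v (volume.restrict s)) (hw : AEMeasurable w (volume.restrict s))
    (hs : Metric.ball x₀ δ ⊆ s) (htouch : ∀ x ∈ Metric.ball x₀ δ, w x ≤ C * |x - x₀| ^ k)
    (hsmall : powerEntropy β v (volume.restrict s) * ENNReal.ofReal (2 * (C * δ ^ k)) ^ β ≤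
      ENNReal.ofReal δ) :
    ENNReal.ofReal (C * δ ^ (k + 1 / p.toReal)) ≤
      eLpNorm (fun x ↦ v x - w x) p (volume.restrict s) := by
  have hball : volume.restrict s (Metric.ball x₀ δ) = ENNReal.ofReal δ + ENNReal.ofReal δ := by
    rw [Measure.restrict_apply measurableSet_ball, inter_eq_left.2 hs, Real.volume_ball,
      two_mul, ENNReal.ofReal_add hδ.le hδ.le]
  have hw_ball : ∀ x ∈ Metric.ball x₀ δ, w x ≤ C * δ ^ k := fun x hx ↦ by
    have hdist : |x - x₀| ≤ δ := (Metric.mem_ball.1 hx).le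
    exact (htouch x hx).trans (by gcongr)
  have hhalf : ENNReal.ofReal δ ≤ volume.restrict s (Metric.ball x₀ δ) -
      powerEntropy β v (volume.restrict s) * ENNReal.ofReal (2 * (C * δ ^ k)) ^ β := by
    rw [hball]
    exact ENNReal.le_sub_of_add_le_left (ne_top_of_le_ne_top ENNReal.ofReal_ne_top hsmall)
      (by gcongr)
  calc ENNReal.ofReal (C * δ ^ (k + 1 / p.toReal))
      = ENNReal.ofReal (C * δ ^ k) * ENNReal.ofReal δ ^ (1 / p.toReal) := by
        rw [ENNReal.ofReal_rpow_of_pos hδ, ← ENNReal.ofReal_mul (by positivity),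
          Real.rpow_add hδ, mul_assoc]
    _ ≤ ENNReal.ofReal (C * δ ^ k) * (volume.restrict s (Metric.ball x₀ δ) -
          powerEntropy β v (volume.restrict s) * ENNReal.ofReal (2 * (C * δ ^ k)) ^ β) ^
            (1 / p.toReal) := by gcongr
    _ ≤ eLpNorm (fun x ↦ v x - w x) p (volume.restrict s) :=
        ofReal_mul_measure_sub_rpow_le_eLpNorm_sub hβ (by positivity) hp₀ hp hv hw hw_ball

lemma ofReal_rpow_le_eLpNorm_sub_of_powerEntropy_le {r E : ℝ} (hk : 0 < k) (hkβ : 1 < k * β)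
    (hC : 1 ≤ C) (hr : 0 < r) (hE : 0 ≤ E) (hp₀ : p ≠ 0) (hp : p ≠ ∞)
    (hv : AEMeasurable v (volume.restrict s)) (hw : AEMeasurable w (volume.restrict s))
    (hs : Metric.ball x₀ r ⊆ s) (htouch : ∀ x ∈ Metric.ball x₀ r, w x ≤ C * |x - x₀| ^ k)
    (hentropy : powerEntropy β v (volume.restrict s) ≤ ENNReal.ofReal E) :
    ENNReal.ofReal ((r ^ (-(k * β - 1)) + (2 * C) ^ β * E) ^
        (-((k + 1 / p.toReal) / (k * β - 1)))) ≤
      eLpNorm (fun x ↦ v x - w x) p (volume.restrict s) := by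
  have hβ : 0 < β := pos_of_mul_pos_right (zero_lt_one.trans hkβ) hk.le
  have hgap : 0 < k * β - 1 := sub_pos.2 hkβ
  have hC₀ : 0 < C := by positivity
  set M := r ^ (-(k * β - 1)) + (2 * C) ^ β * E
  have hM : 0 < M := by positivity
  set δ := M ^ (-(k * β - 1)⁻¹) with hδ_def
  have hδ : 0 < δ := by positivity
  have hδr : δ ≤ r := by
    calc δ ≤ (r ^ (-(k * β - 1))) ^ (-(k * β - 1)⁻¹) :=
          Real.rpow_le_rpow_of_nonpos (by positivity) (le_add_of_nonneg_right (by positivity))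
            (by simpa using hgap.le)
      _ = r := by
          rw [← Real.rpow_mul hr.le, neg_mul_neg, mul_inv_cancel₀ hgap.ne', Real.rpow_one]
  have hball : Metric.ball x₀ δ ⊆ Metric.ball x₀ r := Metric.ball_subset_ball hδr
  have hscale : E * (2 * (C * δ ^ k)) ^ β ≤ δ := by
    rw [← mul_assoc 2]
    exact mul_mul_rpow_rpow_le_rpow_neg_inv_sub_one hM (by positivity) hkβ.ne'
      (le_add_of_nonneg_left (by positivity))
  have hsmall : powerEntropy β v (volume.restrict s) * ENNReal.ofReal (2 * (C * δ ^ k)) ^ β ≤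
      ENNReal.ofReal δ := by
    rw [ENNReal.ofReal_rpow_of_pos (by positivity)]
    grw [hentropy, ← ENNReal.ofReal_mul hE, hscale]
  have hpow : M ^ (-((k + 1 / p.toReal) / (k * β - 1))) = δ ^ (k + 1 / p.toReal) := by
    rw [hδ_def, ← Real.rpow_mul hM.le, div_eq_inv_mul, neg_mul]
  calc ENNReal.ofReal (M ^ (-((k + 1 / p.toReal) / (k * β - 1))))
      ≤ ENNReal.ofReal (C * δ ^ (k + 1 / p.toReal)) := by
        rw [hpow]
        exact ENNReal.ofReal_le_ofReal (le_mul_of_one_le_left (by positivity) hC)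
    _ ≤ eLpNorm (fun x ↦ v x - w x) p (volume.restrict s) :=
        ofReal_mul_rpow_le_eLpNorm_sub_of_powerEntropy_mul_le hβ.le hk.le hC₀ hδ hp₀ hp hv hw
          (hball.trans hs) (fun x hx ↦ htouch x (hball hx)) hsmall

theorem touchdown_power_law_general {S₀ K₀ γ : ℝ} (hk : 0 < k) (hkβ : 1 < k * β)
    (hp₀ : p ≠ 0) (hp : p ≠ ∞) (hγ : (k + 1 / p.toReal) / (k * β - 1) ≤ γ)
    (hS₀ : 0 ≤ S₀) (hK₀ : 0 < K₀) (hs : s ∈ 𝓝 x₀)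
    (hw : AEMeasurable w (volume.restrict s)) (htouch : ∀ᶠ x in 𝓝 x₀, w x ≤ C * |x - x₀| ^ k)
    {u : ℝ → ℝ → ℝ} (hu : ∀ t, 0 ≤ t → AEMeasurable (u t) (volume.restrict s))
    (hentropy : ∀ t, 0 ≤ t →
      powerEntropy β (u t) (volume.restrict s) ≤ ENNReal.ofReal (S₀ + K₀ * t)) :
    ∃ K₂ K₃ : ℝ, 0 < K₂ ∧ 0 < K₃ ∧ ∀ t, 0 ≤ t →
      ENNReal.ofReal ((K₂ + K₃ * t) ^ (-γ)) ≤
        eLpNorm (fun x ↦ u t x - w x) p (volume.restrict s) := by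
  obtain ⟨R, hR, hRs⟩ := Metric.mem_nhds_iff.1 (inter_mem hs htouch)
  -- `1 ≤ D` gives the bound leading constant `1`, and `r ≤ 1` makes its base at least `1`, so that
  -- the exponent can be raised to `γ`.
  set r := min R 1
  set D := max C 1
  have hr : 0 < r := lt_min hR one_pos
  have hD : 1 ≤ D := le_max_right _ _
  have hball : Metric.ball x₀ r ⊆ Metric.ball x₀ R := Metric.ball_subset_ball (min_le_left _ _)
  have htouchD : ∀ x ∈ Metric.ball x₀ r, w x ≤ D * |x - x₀| ^ k := fun x hx ↦
    (hRs (hball hx)).2.trans (by gcongr; exact le_max_left _ _)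
  refine ⟨r ^ (-(k * β - 1)) + (2 * D) ^ β * S₀, (2 * D) ^ β * K₀, by positivity,
    by positivity, fun t ht ↦ ?_⟩
  have hE : 0 ≤ S₀ + K₀ * t := by positivity
  have hbase : 1 ≤ r ^ (-(k * β - 1)) + (2 * D) ^ β * (S₀ + K₀ * t) :=
    (Real.one_le_rpow_of_pos_of_le_one_of_nonpos hr (min_le_right _ _) (by linarith)).trans
      (le_add_of_nonneg_right (by positivity))
  rw [add_assoc, mul_assoc, ← mul_add]
  exact (ENNReal.ofReal_le_ofReal (Real.rpow_le_rpow_of_exponent_le hbase (neg_le_neg hγ))).trans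
    (ofReal_rpow_le_eLpNorm_sub_of_powerEntropy_le hk hkβ hD hr hE hp₀ hp (hu t ht) hw
      (fun x hx ↦ (hRs (hball hx)).1) htouchD (hentropy t ht))

end Touchdown

lemma quadratic_touchdown_exponent_le {β : ℝ} (hβ : 1 < β) :
    (2 + 1 / (2 : ℝ≥0∞).toReal) / (2 * β - 1) ≤ 3 / (2 * (β - 1)) := by
  rw [ENNReal.toReal_ofNat, div_le_div_iff₀ (by linarith) (by linarith)]
  linarith

/-- Power-law lower bound on the distance from a steady state with a
quadratic touchdown zero: if `u*` is continuous, `2π`-periodic, vanishes at `θ₀` with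
`u*(θ) ≤ C(θ − θ₀)²` on `(−π,π)`, and the entropy of `u(t,·)` (with the convention that
`v^{−β} = +∞` where `v = 0`) grows at most linearly, then there are `K₂, K₃ > 0` with
`‖u(t,·) − u*‖_{L²(−π,π)} ≥ (K₂ + K₃t)^{−3/(2(β−1))}`. -/
theorem touchdown_power_law (β S₀ K₀ θ₀ C : ℝ)
    (hβ : 1 < β) (hS₀ : 0 < S₀) (hK₀ : 0 < K₀) (hC : 0 < C)
    (hθ₀ : θ₀ ∈ Ioo (-π) π)
    (ustar : ℝ → ℝ) (hcont : Continuous ustar) (hper : Function.Periodic ustar (2*π))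
    (hnonnegstar : ∀ θ : ℝ, 0 ≤ ustar θ) (hzero : ustar θ₀ = 0)
    (hquad : ∀ θ ∈ Ioo (-π) π, ustar θ ≤ C * (θ - θ₀)^2)
    (u : ℝ → ℝ → ℝ) (hmeas : Measurable (fun p : ℝ × ℝ => u p.1 p.2))
    (hnonneg : ∀ t θ : ℝ, 0 ≤ u t θ)
    (huper : ∀ t : ℝ, Function.Periodic (u t) (2*π))
    (hentropy : ∀ t : ℝ, 0 ≤ t →
      (∫⁻ θ in Ioo (-π) π, (ENNReal.ofReal (u t θ))⁻¹ ^ β) ≤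
        ENNReal.ofReal (S₀ + K₀ * t)) :
    ∃ K₂ K₃ : ℝ, 0 < K₂ ∧ 0 < K₃ ∧ ∀ t : ℝ, 0 ≤ t →
      ENNReal.ofReal ((K₂ + K₃ * t) ^ (-(3 / (2 * (β - 1))))) ≤
        eLpNorm (fun θ => u t θ - ustar θ) 2 (volume.restrict (Ioo (-π) π)) := by
  have hIoo : Ioo (-π) π ∈ 𝓝 θ₀ := isOpen_Ioo.mem_nhds hθ₀
  have htouch : ∀ᶠ θ in 𝓝 θ₀, ustar θ ≤ C * |θ - θ₀| ^ (2 : ℝ) := by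
    filter_upwards [hIoo] with θ hθ
    simpa using hquad θ hθ
  exact touchdown_power_law_general two_pos (by linarith) two_ne_zero ENNReal.ofNat_ne_top
    (quadratic_touchdown_exponent_le hβ) hS₀.le hK₀ hIoo hcont.measurable.aemeasurable htouch
    (fun t _ ↦ (hmeas.comp measurable_prodMk_left).aemeasurable) hentropy
end
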